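/- Let F₁, …, Fₙ be polynomials in n complex variables (elements of MvPolynomial (Fin n) ℂ), and let Z = { x : Fin n → ℂ | Fᵢ(x) = 0 for all i = 1, …, n } be their common zero set in ℂⁿ. If Z is finite, then the number of points of Z is at most d₁ · d₂ ⋯ dₙ, where dᵢ is the total degree of Fᵢ. -/

import Mathlib

namespace BezoutAux
open MvPolynomial

lemma height_ker_eval {R k : Type*} [CommRing R] [IsNoetherianRing R] [Field k]
    (φ : R →+* k) (hφ : Function.Surjective φ) (n : ℕ) (x : Fin n → k) :
    (RingHom.ker φ).height + n ≤ (RingHom.ker (eval₂Hom φ x)).height := by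
  induction n with
  | zero =>
    have h : RingHom.ker φ = (RingHom.ker (eval₂Hom φ x)).comap
        (isEmptyAlgEquiv R (Fin 0)).symm.toRingEquiv := by
      ext a
      have : (isEmptyAlgEquiv R (Fin 0)).symm a = C a := (isEmptyAlgEquiv R (Fin 0)).symm.commutes a
      simp [RingHom.mem_ker, this]
    rw [h, RingEquiv.height_comap]
    simp
  | succ n ih =>
    let ψ := eval₂Hom φ (fun i => x (Fin.succ i))
    have hψ : Function.Surjective ψ := fun c => by
      obtain ⟨a, rfl⟩ := hφ c
      exact ⟨C a, by simp [ψ]⟩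
    let θ : Polynomial (MvPolynomial (Fin n) R) →+* k := Polynomial.eval₂RingHom ψ (x 0)
    have hθ : Function.Surjective θ := fun c => by
      obtain ⟨a, rfl⟩ := hψ c
      exact ⟨Polynomial.C a, by simp [θ]⟩
    have hmax : (RingHom.ker θ).IsMaximal := RingHom.ker_isMaximal_of_surjective θ hθ
    have hover : (RingHom.ker θ).LiesOver (RingHom.ker ψ) := ⟨by
      ext a; simp [θ, RingHom.mem_ker, Ideal.under, Ideal.mem_comap]⟩
    have h1 := Polynomial.height_eq_height_add_one (RingHom.ker ψ) (RingHom.ker θ)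
    have h2 : RingHom.ker (eval₂Hom φ x) = (RingHom.ker θ).comap
        (finSuccEquiv R n).toRingEquiv := by
      have : eval₂Hom φ x = θ.comp (finSuccEquiv R n : _ →+* _) := by
        apply MvPolynomial.ringHom_ext
        · intro r; simp [θ, ψ, finSuccEquiv_apply]
        · intro i
          refine Fin.cases ?_ (fun j => ?_) i
          · simp [θ, finSuccEquiv_apply]
          · simp [θ, ψ, finSuccEquiv_apply]
      rw [this]
      rfl
    rw [h2, RingEquiv.height_comap, h1]
    push_cast
    rw [← add_assoc]
    gcongr
    exact ih _

lemma exists_point_le {n : ℕ} (q : Ideal (MvPolynomial (Fin n) ℂ)) [hq : q.IsPrime]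
    (F : Fin n → MvPolynomial (Fin n) ℂ) (hF : ∀ i, F i ∈ q)
    (hfin : {x | ∀ i, MvPolynomial.eval x (F i) = 0}.Finite) :
    ∃ z, ∀ f, MvPolynomial.eval z f = 0 → f ∈ q := by
  by_contra! hcon
  choose g hg hgq using hcon
  have hmem : ∏ z ∈ hfin.toFinset, g z ∈ q := by
    rw [← IsPrime.vanishingIdeal_zeroLocus (K := ℂ) q, mem_vanishingIdeal_iff]
    intro x hx
    rw [map_prod]
    refine Finset.prod_eq_zero (i := x) ?_ ?_
    · simp only [Set.Finite.mem_toFinset, Set.mem_ofPred_eq]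
      intro i
      exact hx _ (hF i)
    · exact hg x
  obtain ⟨z, -, hz⟩ := (Ideal.IsPrime.prod_mem_iff).1 hmem
  exact hgq z hz

lemma exists_smul_mem {R : Type*} [CommRing R] {n : ℕ} (d : Fin n → ℕ) (s : R)
    (G : Fin n → MvPolynomial (Fin n) R) (hG : ∀ i, (G i).totalDegree ≤ d i) (N : ℕ) :
    ∃ r : R, r - 1 ∈ Ideal.span {s} ∧ ∀ f : MvPolynomial (Fin n) R, f.totalDegree ≤ N →
      r • f ∈ Submodule.span R (Set.range fun a : (∀ i, Fin (d i)) =>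
          (monomial (Finsupp.equivFunOnFinite.symm fun i => (a i : ℕ)) (1 : R))) ⊔
        (Ideal.span (Set.range fun i => X i ^ d i + C s * G i)).restrictScalars R := by
  set S := Submodule.span R (Set.range fun a : (∀ i, Fin (d i)) =>
          (monomial (Finsupp.equivFunOnFinite.symm fun i => (a i : ℕ)) (1 : R))) with hS
  set J := (Ideal.span (Set.range fun i => X i ^ d i + C s * G i)) with hJ
  set T := S ⊔ J.restrictScalars R with hT
  let M := restrictTotalDegree (Fin n) R N
  have key : ∀ f ∈ M, f ∈ T ⊔ Ideal.span {s} • M := by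
    intro f hf
    rw [mem_restrictTotalDegree] at hf
    rw [f.as_sum]
    refine Submodule.sum_mem _ fun a ha => ?_
    have hadeg : a.degree ≤ N := le_trans (le_totalDegree ha) hf
    have : monomial a (f.coeff a) = f.coeff a • monomial a (1 : R) := by
      simp [smul_monomial]
    rw [this]
    refine Submodule.smul_mem _ _ ?_
    by_cases hred : ∀ i, a i < d i
    · refine Submodule.mem_sup_left (Submodule.mem_sup_left (Submodule.subset_span ?_))
      refine ⟨fun i => ⟨a i, hred i⟩, ?_⟩
      change monomial _ _ = _
      congr 2
      ext i
      rfl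
    · push Not at hred
      obtain ⟨i, hi⟩ := hred
      obtain ⟨b, rfl⟩ : ∃ b, a = b + Finsupp.single i (d i) := by
        refine ⟨a - Finsupp.single i (d i), ?_⟩
        rw [tsub_add_cancel_of_le]
        simpa using hi
      have e : monomial (b + Finsupp.single i (d i)) (1 : R) =
          monomial b 1 * (X i ^ d i + C s * G i) + s • (- (monomial b 1 * G i)) := by
        rw [X_pow_eq_monomial, smul_eq_C_mul, mul_add, monomial_mul]
        ring_nf
      rw [e]
      refine Submodule.add_mem_sup (Submodule.mem_sup_right ?_) ?_
      · rw [Submodule.restrictScalars_mem]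
        exact Ideal.mul_mem_left _ _ (Ideal.subset_span ⟨i, rfl⟩)
      · refine Submodule.smul_mem_smul (Ideal.mem_span_singleton_self s) ?_
        rw [mem_restrictTotalDegree, totalDegree_neg]
        refine (totalDegree_mul _ _).trans ?_
        have h1 := totalDegree_monomial_le b (1 : R)
        have h2 := hG i
        simp only [map_add, Finsupp.degree_single] at hadeg
        have h3 : (b.sum fun _ => id) = b.degree := rfl
        rw [h3] at h1
        omega
  have hMfg : M.FG := (Submodule.fg_top _).1 (Module.Finite.fg_top (R := R) (M := M))
  obtain ⟨r, hr, hr0⟩ := Submodule.exists_sub_one_mem_and_smul_eq_zero_of_fg_of_le_smul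
    (Ideal.span {s}) (M.map T.mkQ) (hMfg.map _) (by
      rintro _ ⟨f, hf, rfl⟩
      obtain ⟨u, hu, v, hv, rfl⟩ := Submodule.mem_sup.1 (key f hf)
      rw [map_add, ← Submodule.map_smul'']
      rw [show T.mkQ u = 0 by simpa using hu, zero_add]
      exact ⟨v, hv, rfl⟩)
  refine ⟨r, hr, fun f hf => ?_⟩
  have := hr0 (T.mkQ f) ⟨f, (mem_restrictTotalDegree _ _ _).2 hf, rfl⟩
  rw [← map_smul] at this
  exact (Submodule.Quotient.mk_eq_zero T).1 this

lemma exists_relation {R : Type*} [CommRing R] [IsDomain R] {n : ℕ} (d : Fin n → ℕ) (s : R)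
    (hs : ¬ IsUnit s)
    (G : Fin n → MvPolynomial (Fin n) R) (hG : ∀ i, (G i).totalDegree ≤ d i)
    (l : MvPolynomial (Fin n) R) :
    ∃ P : Polynomial R, P ≠ 0 ∧ P.natDegree ≤ ∏ i, d i ∧
      Polynomial.aeval l P ∈ Ideal.span (Set.range fun i => X i ^ d i + C s * G i) := by
  set D := ∏ i, d i with hD
  obtain ⟨r, hr, hrm⟩ := exists_smul_mem d s G hG (D * l.totalDegree)
  have hr0 : r ≠ 0 := by
    rintro rfl
    apply hs
    rw [Ideal.mem_span_singleton] at hr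
    exact isUnit_of_dvd_unit hr (by simp)
  have hj : ∀ j : Fin (D + 1), ∃ c : (∀ i, Fin (d i)) → R,
      r • l ^ (j : ℕ) - ∑ a, c a • monomial (Finsupp.equivFunOnFinite.symm fun i => (a i : ℕ)) (1 : R)
        ∈ Ideal.span (Set.range fun i => X i ^ d i + C s * G i) := by
    intro j
    have h := hrm (l ^ (j : ℕ)) ((totalDegree_pow _ _).trans
      (Nat.mul_le_mul_right _ (by omega)))
    obtain ⟨u, hu, v, hv, huv⟩ := Submodule.mem_sup.1 h
    obtain ⟨c, rfl⟩ := (Submodule.mem_span_range_iff_exists_fun R).1 hu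
    refine ⟨c, ?_⟩
    rw [← huv, add_sub_cancel_left]
    exact hv
  choose c hc using hj
  let f : (Fin (D + 1) → R) →ₗ[R] ((∀ i, Fin (d i)) → R) := Fintype.linearCombination R c
  have hf : ¬ Function.Injective f := fun hinj => by
    have := card_le_of_injective R f hinj
    simp [← hD] at this
  rw [← LinearMap.ker_eq_bot, Submodule.eq_bot_iff] at hf
  push Not at hf
  obtain ⟨w, hw, hw0⟩ := hf
  rw [LinearMap.mem_ker] at hw
  refine ⟨Polynomial.C r * ∑ j : Fin (D + 1), Polynomial.monomial (j : ℕ) (w j), ?_, ?_, ?_⟩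
  · refine mul_ne_zero (by simpa using hr0) fun h => hw0 ?_
    funext j
    have := congrArg (fun p => p.coeff (j : ℕ)) h
    simpa [Polynomial.finsetSum_coeff, Polynomial.coeff_monomial, Fin.val_inj] using this
  · refine (Polynomial.natDegree_C_mul_le _ _).trans ?_
    refine Polynomial.natDegree_sum_le_of_forall_le _ _ fun j _ => ?_
    refine (Polynomial.natDegree_monomial_le _).trans (by omega)
  · have e : Polynomial.aeval l (Polynomial.C r * ∑ j : Fin (D + 1), Polynomial.monomial (j : ℕ) (w j))
        = ∑ j, C (w j) * (r • l ^ (j : ℕ) - ∑ a, c j a •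
          monomial (Finsupp.equivFunOnFinite.symm fun i => (a i : ℕ)) (1 : R)) := by
      have hz : ∑ j, C (w j) * (∑ a, c j a •
          monomial (Finsupp.equivFunOnFinite.symm fun i => (a i : ℕ)) (1 : R)) = 0 := by
        simp_rw [Finset.mul_sum]
        rw [Finset.sum_comm]
        refine Finset.sum_eq_zero fun a _ => ?_
        have := congrFun hw a
        simp only [f, Fintype.linearCombination_apply, Finset.sum_apply, Pi.smul_apply,
          smul_eq_mul, Pi.zero_apply] at this
        simp_rw [smul_eq_C_mul, ← mul_assoc, ← Finset.sum_mul, ← C_mul, ← map_sum]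
        rw [this]; simp
      simp_rw [mul_sub]
      rw [Finset.sum_sub_distrib, hz, sub_zero, map_mul, map_sum, Finset.mul_sum]
      refine Finset.sum_congr rfl fun j _ => ?_
      rw [Polynomial.aeval_C, Polynomial.aeval_monomial, smul_eq_C_mul]
      simp only [algebraMap_eq]
      ring
    rw [e]
    exact Ideal.sum_mem _ fun j _ => Ideal.mul_mem_left _ _ (hc j)

lemma exists_separating {n : ℕ} (Z : Set (Fin n → ℂ)) (hZ : Z.Finite) :
    ∃ l : MvPolynomial (Fin n) ℂ, Set.InjOn (fun z => MvPolynomial.eval z l) Z := by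
  have : Finite Z := hZ
  obtain ⟨f, hf⟩ := Module.exists_dual_forall_apply_ne_zero (K := ℂ)
    (fun p : {p : Z × Z // p.1 ≠ p.2} => (p.1.1 : Fin n → ℂ) - p.1.2) (by
      rintro ⟨⟨a, b⟩, h⟩ h0
      exact h (Subtype.ext (sub_eq_zero.1 h0)))
  have hl : ∀ z, MvPolynomial.eval z (∑ i, C (f (Pi.single i 1)) * X i) = f z := by
    intro z
    conv_rhs => rw [pi_eq_sum_univ' z]
    simp [mul_comm]
  refine ⟨∑ i, C (f (Pi.single i 1)) * X i, ?_⟩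
  intro a ha b hb hab
  by_contra hne
  simp only [hl] at hab
  exact hf ⟨⟨⟨a, ha⟩, ⟨b, hb⟩⟩, fun h => hne (congrArg Subtype.val h)⟩ (by simp [hab])


lemma not_mem_of_minimal {n : ℕ} (F : Fin n → MvPolynomial (Fin n) ℂ)
    (hfin : {x | ∀ i, MvPolynomial.eval x (F i) = 0}.Finite)
    (H : Fin n → MvPolynomial (Fin n) (Polynomial ℂ))
    (hH : ∀ i, ∃ K, H i = MvPolynomial.map Polynomial.C (F i) + C Polynomial.X * K)
    (q : Ideal (MvPolynomial (Fin n) (Polynomial ℂ)))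
    (hq : q ∈ (Ideal.span (Set.range H)).minimalPrimes) : C Polynomial.X ∉ q := by
  intro ht
  have hprime : q.IsPrime := hq.isPrime
  have hheight : q.height ≤ n := by
    have h := Ideal.height_le_card_of_mem_minimalPrimes_span (Set.finite_range H) hq
    refine h.trans ?_
    have : (Set.range H).ncard ≤ n := by
      have := Set.ncard_image_le (f := H) (Set.finite_univ (α := Fin n))
      simpa [Set.image_univ, Set.ncard_univ] using this
    exact_mod_cast this
  have hred : ∀ f : MvPolynomial (Fin n) (Polynomial ℂ),
      f - MvPolynomial.map Polynomial.C (MvPolynomial.map (Polynomial.evalRingHom 0) f) ∈ q := by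
    intro f
    induction f using MvPolynomial.induction_on with
    | C a =>
      have e : C a - MvPolynomial.map Polynomial.C (MvPolynomial.map (Polynomial.evalRingHom 0)
          (C a : MvPolynomial (Fin n) (Polynomial ℂ))) = C a.divX * C Polynomial.X := by
        rw [map_C, map_C, ← C_mul, ← C_sub]
        congr 1
        rw [sub_eq_iff_eq_add, Polynomial.coe_evalRingHom, ← Polynomial.coeff_zero_eq_eval_zero,
          Polynomial.divX_mul_X_add]
      rw [e]
      exact Ideal.mul_mem_left _ _ ht
    | add f g hf hg =>
      have := q.add_mem hf hg
      rw [map_add, map_add]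
      convert this using 1
      ring
    | mul_X f i hf =>
      rw [map_mul, map_mul, map_X, map_X, ← sub_mul]
      exact Ideal.mul_mem_right _ _ hf
  have hq' : (q.comap (MvPolynomial.map (σ := Fin n) (Polynomial.C (R := ℂ)))).IsPrime :=
    Ideal.IsPrime.comap _
  obtain ⟨z, hz⟩ := exists_point_le (q.comap (MvPolynomial.map Polynomial.C)) F (by
    intro i
    obtain ⟨K, hK⟩ := hH i
    rw [Ideal.mem_comap]
    have h1 : H i ∈ q := hq.1.2 (Ideal.subset_span ⟨i, rfl⟩)
    rw [hK] at h1
    exact (Submodule.add_mem_iff_left _ (Ideal.mul_mem_right _ _ ht)).1 h1) hfin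
  have hle : RingHom.ker (eval₂Hom (Polynomial.evalRingHom (0 : ℂ)) z) ≤ q := by
    intro f hf
    have h1 := hz (MvPolynomial.map (Polynomial.evalRingHom 0) f) (by
      rw [eval_map]; exact hf)
    have := q.add_mem (hred f) h1
    simpa using this
  have h1 := height_ker_eval (Polynomial.evalRingHom (0 : ℂ))
    (fun c => ⟨Polynomial.C c, by simp⟩) n z
  have hmax : (RingHom.ker (Polynomial.evalRingHom (0 : ℂ))).IsMaximal :=
    RingHom.ker_isMaximal_of_surjective _ (fun c => ⟨Polynomial.C c, by simp⟩)
  rw [IsPrincipalIdealRing.height_eq_one_of_isMaximal _ (Polynomial.not_isField ℂ)] at h1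
  have h2 := (h1.trans (Ideal.height_mono hle)).trans hheight
  norm_cast at h2
  omega

end BezoutAux

open MvPolynomial BezoutAux in
/-- Bézout's inequality: if `F₁, …, Fₙ` are polynomials in `n` complex variables whose
common zero set `Z ⊆ ℂⁿ` is finite, then the number of points of `Z` is at most the
product of the total degrees of the `Fᵢ`. -/
theorem bezout_inequality
    (n : ℕ) (F : Fin n → MvPolynomial (Fin n) ℂ)
    (Z : Set (Fin n → ℂ)) (hZ : Z = {x | ∀ i, MvPolynomial.eval x (F i) = 0})
    (hZfin : Z.Finite) :
    Z.ncard ≤ ∏ i, (F i).totalDegree := by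
  obtain ⟨l, hl⟩ := exists_separating Z hZfin
  set s : Polynomial ℂ := 1 - Polynomial.X with hs
  set G : Fin n → MvPolynomial (Fin n) (Polynomial ℂ) := fun i =>
    MvPolynomial.map Polynomial.C (F i) - X i ^ (F i).totalDegree with hGdef
  have hsu : ¬ IsUnit s := fun h => by
    have := h.map (Polynomial.evalRingHom (1 : ℂ))
    simp [hs] at this
  obtain ⟨P, hP0, hPdeg, hP⟩ := exists_relation (fun i => (F i).totalDegree) s hsu G (by
    intro i
    refine (totalDegree_sub _ _).trans (max_le ?_ ?_)
    · exact Finset.sup_mono (support_map_subset _ _)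
    · simp) (MvPolynomial.map Polynomial.C l)
  set H : Fin n → MvPolynomial (Fin n) (Polynomial ℂ) :=
    fun i => X i ^ (F i).totalDegree + C s * G i with hH
  have hnu : ¬ IsUnit (Polynomial.C (Polynomial.X : Polynomial ℂ)) := by
    rw [Polynomial.isUnit_C]; exact Polynomial.not_isUnit_X
  obtain ⟨Q, hQ, hQX⟩ :=
    (FiniteMultiplicity.of_not_isUnit hnu hP0).exists_eq_pow_mul_and_not_dvd
  set k := multiplicity (Polynomial.C (Polynomial.X : Polynomial ℂ)) P
  set p := Q.map (Polynomial.evalRingHom (0 : ℂ)) with hp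
  have hp0 : p ≠ 0 := by
    intro h
    apply hQX
    rw [Polynomial.C_dvd_iff_dvd_coeff]
    intro i
    have := congrArg (fun p => p.coeff i) h
    simp only [hp, Polynomial.coeff_map, Polynomial.coeff_zero] at this
    rw [Polynomial.X_dvd_iff, Polynomial.coeff_zero_eq_eval_zero]
    exact this
  have hpdeg : p.natDegree ≤ ∏ i, (F i).totalDegree := by
    refine le_trans Polynomial.natDegree_map_le (le_trans ?_ hPdeg)
    rw [hQ, ← Polynomial.C_pow, Polynomial.natDegree_C_mul (pow_ne_zero _ Polynomial.X_ne_zero)]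
  have hroot : ∀ z ∈ Z, p.eval (MvPolynomial.eval z l) = 0 := by
    intro z hz
    set ev := eval₂Hom (Polynomial.evalRingHom (0 : ℂ)) z with hev
    have hmap : ∀ f, ev (MvPolynomial.map Polynomial.C f) = MvPolynomial.eval z f := by
      intro f
      have : ev.comp (MvPolynomial.map Polynomial.C) = MvPolynomial.eval z := by
        apply MvPolynomial.ringHom_ext <;> simp [hev]
      exact congrArg (fun g => g f) this
    have hJ : Ideal.span (Set.range H) ≤ RingHom.ker ev := by
      rw [Ideal.span_le]
      rintro _ ⟨i, rfl⟩
      have hFz : MvPolynomial.eval z (F i) = 0 := by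
        rw [hZ] at hz; exact hz i
      rw [SetLike.mem_coe, RingHom.mem_ker]
      simp only [hH, hGdef, map_add, map_mul, map_sub, hmap, hFz]
      simp [hev, hs]
    have hpr : (RingHom.ker ev).IsPrime := RingHom.ker_isPrime ev
    obtain ⟨q, hq, hqle⟩ := Ideal.exists_minimalPrimes_le hJ
    have hX := not_mem_of_minimal F (hZ ▸ hZfin) H (by
      intro i
      refine ⟨X i ^ (F i).totalDegree - MvPolynomial.map Polynomial.C (F i), ?_⟩
      simp only [hH, hGdef, hs, C_sub, C_1]
      ring) q hq
    have hprime : q.IsPrime := hq.isPrime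
    have h1 : Polynomial.aeval (MvPolynomial.map Polynomial.C l) P ∈ q := hq.1.2 hP
    rw [hQ, map_mul, map_pow, Polynomial.aeval_C] at h1
    have h2 := (hprime.mem_or_mem h1).resolve_left (fun h => hX (hprime.mem_of_pow_mem _ h))
    have h3 := hqle h2
    rw [RingHom.mem_ker, Polynomial.aeval_def, Polynomial.hom_eval₂, hmap] at h3
    rw [hp, Polynomial.eval_map]
    have e : ev.comp (algebraMap (Polynomial ℂ) (MvPolynomial (Fin n) (Polynomial ℂ))) =
        Polynomial.evalRingHom (0 : ℂ) := by
      apply RingHom.ext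
      intro a
      simp [hev, algebraMap_eq]
    rw [e] at h3
    exact h3
  rw [← Set.InjOn.ncard_image hl]
  calc _ ≤ (p.roots.toFinset : Set ℂ).ncard := by
        refine Set.ncard_le_ncard ?_ (Finset.finite_toSet _)
        rintro _ ⟨z, hz, rfl⟩
        simpa [hp0] using hroot z hz
    _ = p.roots.toFinset.card := Set.ncard_coe_finset _
    _ ≤ p.natDegree := (Multiset.toFinset_card_le _).trans (Polynomial.card_roots' p)
    _ ≤ _ := hpdeg
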